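/- Let d ≥ 1, β > 0, and let c₁, c₂ ∈ ℝ^d with ‖c₁ − c₂‖ = ε. If X is uniformly distributed on the closed ball B(c₁, β), Y is uniformly distributed on the closed ball B(c₂, β), and X and Y are independent, then the expected squared distance between them is E[‖X − Y‖²] = ε² + (2d/(d+2))·β². -/

import Mathlib

/-!
Write `U = X - c₁`, `V = Y - c₂` and `e = c₁ - c₂`, so that `X - Y = U - V + e`. Expanding the
square gives
`‖X - Y‖² = ‖U‖² + ‖V‖² + ‖e‖² - 2⟪U, V⟫ + 2⟪e, U⟫ - 2⟪e, V⟫`.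
By central symmetry of the ball `U` and `V` have mean zero (`setIntegral_closedBall_sub_center`),
so the last two terms vanish in expectation, and independence gives `E⟪U, V⟫ = ⟪E U, E V⟫ = 0`.
Integrating in polar coordinates (`setIntegral_closedBall_norm_sub_sq`),
`E‖U‖² = E‖V‖² = d β² / (d + 2)`, which yields the claim.
-/

open MeasureTheory Metric ProbabilityTheory

/-- The closed ball is symmetric about its center, so its first central moment vanishes. -/
lemma setIntegral_closedBall_sub_center {d : ℕ} (c : EuclideanSpace ℝ (Fin d)) (β : ℝ) :
    ∫ x in closedBall c β, (x - c) = 0 := by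
  have h1 : ∫ x in closedBall c β, (x - c)
      = ∫ x : EuclideanSpace ℝ (Fin d), (closedBall 0 β).indicator (fun y => y) x := by
    rw [← integral_indicator measurableSet_closedBall,
      ← integral_sub_right_eq_self
        (fun x => (closedBall (0 : EuclideanSpace ℝ (Fin d)) β).indicator (fun y => y) x) c]
    refine integral_congr_ae (Filter.Eventually.of_forall fun x => ?_)
    simp [Set.indicator, dist_eq_norm]
  have h2 : ∫ x : EuclideanSpace ℝ (Fin d), (closedBall 0 β).indicator (fun y => y) x
      = -∫ x : EuclideanSpace ℝ (Fin d), (closedBall 0 β).indicator (fun y => y) x := by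
    rw [← integral_neg, ← integral_neg_eq_self]
    refine integral_congr_ae (Filter.Eventually.of_forall fun x => ?_)
    simp only [Set.indicator, mem_closedBall, dist_zero_right, norm_neg]
    split_ifs <;> simp
  rw [h1]
  have h3 := add_eq_zero_iff_eq_neg.mpr h2
  rw [← two_smul ℝ] at h3
  exact (smul_eq_zero.mp h3).resolve_left two_ne_zero

/-- The second central moment of the closed ball, computed in polar coordinates. -/
lemma setIntegral_closedBall_norm_sub_sq {d : ℕ} (hd : 1 ≤ d) (c : EuclideanSpace ℝ (Fin d))
    {β : ℝ} (hβ : 0 < β) :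
    ∫ x in closedBall c β, ‖x - c‖ ^ 2
      = volume.real (closedBall c β) * ((d : ℝ) / (d + 2) * β ^ 2) := by
  have : NeZero d := ⟨by omega⟩
  have h1 : ∫ x in closedBall c β, ‖x - c‖ ^ 2
      = ∫ x : EuclideanSpace ℝ (Fin d), (Set.Iic β).indicator (fun t => t ^ 2) ‖x‖ := by
    rw [← integral_indicator measurableSet_closedBall,
      ← integral_sub_right_eq_self
        (fun x : EuclideanSpace ℝ (Fin d) => (Set.Iic β).indicator (fun t => t ^ 2) ‖x‖) c]
    refine integral_congr_ae (Filter.Eventually.of_forall fun x => ?_)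
    simp [Set.indicator, dist_eq_norm]
  have h2 : ∫ y in Set.Ioi (0 : ℝ), y ^ (d - 1) • (Set.Iic β).indicator (fun t => t ^ 2) y
      = β ^ (d + 2) / (d + 2) := by
    have : ∀ y : ℝ, y ^ (d - 1) • (Set.Iic β).indicator (fun t => t ^ 2) y
        = (Set.Iic β).indicator (fun t => t ^ (d + 1)) y := by
      intro y
      simp only [Set.indicator, smul_eq_mul]
      split_ifs
      · rw [← pow_add]; congr 1; omega
      · simp
    simp_rw [this]
    rw [setIntegral_indicator measurableSet_Iic, Set.Ioi_inter_Iic,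
      ← intervalIntegral.integral_of_le hβ.le, integral_pow]
    push_cast
    simp
    ring
  rw [h1, integral_fun_norm_addHaar volume, finrank_euclideanSpace_fin, h2,
    Measure.addHaar_real_closedBall volume c hβ.le, finrank_euclideanSpace_fin]
  simp only [nsmul_eq_mul, smul_eq_mul]
  ring

/-- Almost sure boundedness, mean and variance of a uniform point of a closed ball,
relative to its center. -/
lemma uniform_closedBall_moments {d : ℕ} (hd : 1 ≤ d) {β : ℝ} (hβ : 0 < β)
    (c : EuclideanSpace ℝ (Fin d)) {Ω : Type*} [MeasurableSpace Ω] {μ : Measure Ω}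
    {X : Ω → EuclideanSpace ℝ (Fin d)}
    (hX : Measure.map X μ =
      (volume (closedBall c β))⁻¹ • (volume.restrict (closedBall c β))) :
    AEMeasurable X μ ∧ (∀ᵐ ω ∂μ, ‖X ω - c‖ ≤ β) ∧
      ∫ ω, (X ω - c) ∂μ = 0 ∧ ∫ ω, ‖X ω - c‖ ^ 2 ∂μ = (d : ℝ) / (d + 2) * β ^ 2 := by
  have hpos : 0 < volume (closedBall c β) := measure_closedBall_pos _ _ hβ
  have hfin : volume (closedBall c β) ≠ ⊤ := measure_closedBall_lt_top.ne
  have hm : AEMeasurable X μ := by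
    -- A map that is not a.e. measurable pushes `μ` forward to `0`, which is not a uniform law.
    refine AEMeasurable.of_map_ne_zero ?_
    rw [hX]
    intro h
    have := congrArg (fun ν => ν (closedBall c β)) h
    simp [hpos.ne', hfin] at this
  refine ⟨hm, ?_, ?_, ?_⟩
  · have h : ∀ᵐ x ∂(Measure.map X μ), ‖x - c‖ ≤ β := by
      rw [hX]
      refine Measure.ae_smul_measure ?_ _
      filter_upwards [ae_restrict_mem measurableSet_closedBall] with x hx
      rwa [← dist_eq_norm]
    exact ae_of_ae_map hm h
  · rw [← integral_map (f := fun x => x - c) hm (by fun_prop), hX, integral_smul_measure,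
      setIntegral_closedBall_sub_center, smul_zero]
  · rw [← integral_map (f := fun x => ‖x - c‖ ^ 2) hm (by fun_prop), hX, integral_smul_measure,
      setIntegral_closedBall_norm_sub_sq hd c hβ, ENNReal.toReal_inv, smul_eq_mul, measureReal_def,
      inv_mul_cancel_left₀ (ENNReal.toReal_pos hpos.ne' hfin).ne']

/-- If `X` and `Y` are independent and uniformly distributed on the closed balls `B(c₁, β)`
and `B(c₂, β)` in `ℝ^d`, whose centers are at distance `ε`, then
`E[‖X − Y‖²] = ε² + (2d/(d+2))·β²`. -/
theorem stmt_3 (d : ℕ) (hd : 1 ≤ d) (β ε : ℝ) (hβ : 0 < β)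
    (c₁ c₂ : EuclideanSpace ℝ (Fin d)) (hε : ‖c₁ - c₂‖ = ε)
    {Ω : Type*} [MeasureSpace Ω] [IsProbabilityMeasure (volume : Measure Ω)]
    (X Y : Ω → EuclideanSpace ℝ (Fin d))
    (hX : Measure.map X volume =
      (volume (closedBall c₁ β))⁻¹ • (volume.restrict (closedBall c₁ β)))
    (hY : Measure.map Y volume =
      (volume (closedBall c₂ β))⁻¹ • (volume.restrict (closedBall c₂ β)))
    (hindep : IndepFun X Y volume) :
    ∫ ω, ‖X ω - Y ω‖ ^ 2 = ε ^ 2 + (2 * (d : ℝ) / ((d : ℝ) + 2)) * β ^ 2 := by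
  obtain ⟨mX, bX, eX, vX⟩ := uniform_closedBall_moments hd hβ c₁ hX
  obtain ⟨mY, bY, eY, vY⟩ := uniform_closedBall_moments hd hβ c₂ hY
  have iX : Integrable (fun ω => X ω - c₁) volume :=
    Integrable.of_bound (mX.sub_const c₁).aestronglyMeasurable β bX
  have iY : Integrable (fun ω => Y ω - c₂) volume :=
    Integrable.of_bound (mY.sub_const c₂).aestronglyMeasurable β bY
  have iX2 : Integrable (fun ω => ‖X ω - c₁‖ ^ 2) volume := by
    refine Integrable.of_bound (iX.aestronglyMeasurable.norm.pow 2) (β ^ 2) ?_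
    filter_upwards [bX] with ω h
    rw [norm_pow, norm_norm]
    gcongr
  have iY2 : Integrable (fun ω => ‖Y ω - c₂‖ ^ 2) volume := by
    refine Integrable.of_bound (iY.aestronglyMeasurable.norm.pow 2) (β ^ 2) ?_
    filter_upwards [bY] with ω h
    rw [norm_pow, norm_norm]
    gcongr
  have hind : IndepFun (fun ω => X ω - c₁) (fun ω => Y ω - c₂) volume :=
    hindep.comp (φ := fun x => x - c₁) (ψ := fun x => x - c₂) (by fun_prop) (by fun_prop)
  have iXY : Integrable (fun ω => inner ℝ (X ω - c₁) (Y ω - c₂)) volume :=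
    hind.integrable_bilin iX iY (innerSL ℝ)
  have eXY : ∫ ω, inner ℝ (X ω - c₁) (Y ω - c₂) = 0 := by
    have h := hind.integral_bilin iX iY (innerSL ℝ)
    rw [eX, eY, map_zero] at h
    exact h
  have iXe : Integrable (fun ω => inner ℝ (c₁ - c₂) (X ω - c₁)) volume := iX.const_inner _
  have iYe : Integrable (fun ω => inner ℝ (c₁ - c₂) (Y ω - c₂)) volume := iY.const_inner _
  have eXe : ∫ ω, inner ℝ (c₁ - c₂) (X ω - c₁) = 0 := by
    rw [integral_inner iX, eX, inner_zero_right]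
  have eYe : ∫ ω, inner ℝ (c₁ - c₂) (Y ω - c₂) = 0 := by
    rw [integral_inner iY, eY, inner_zero_right]
  have key : ∀ ω, ‖X ω - Y ω‖ ^ 2 = ‖X ω - c₁‖ ^ 2 + ‖Y ω - c₂‖ ^ 2 + ε ^ 2
      - 2 * inner ℝ (X ω - c₁) (Y ω - c₂) + 2 * inner ℝ (c₁ - c₂) (X ω - c₁)
      - 2 * inner ℝ (c₁ - c₂) (Y ω - c₂) := by
    intro ω
    have h : X ω - Y ω = ((X ω - c₁) - (Y ω - c₂)) + (c₁ - c₂) := by abel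
    rw [h, norm_add_sq_real, norm_sub_sq_real, hε,
      real_inner_comm (c₁ - c₂) ((X ω - c₁) - (Y ω - c₂)),
      inner_sub_right (c₁ - c₂) (X ω - c₁)]
    ring
  simp_rw [key]
  rw [integral_sub (by fun_prop) (by fun_prop), integral_add (by fun_prop) (by fun_prop),
    integral_sub (by fun_prop) (by fun_prop), integral_add (by fun_prop) (by fun_prop),
    integral_add iX2 iY2, integral_const_mul, integral_const_mul, integral_const_mul,
    eXY, eXe, eYe, vX, vY]
  simp
  ring
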